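/- Let G be a group, m ≥ 3, and let ε_m denote the composite map on m-tuples given by applying the braid moves β_2, then β_3, …, then β_m. For every m-tuple (σ1,…,σm) ∈ G^m, the m-fold iterate ε_m^m applied to (σ1,…,σm) yields a tuple that is simultaneously conjugate to (σ1,…,σm). -/

import Mathlib

namespace Braid

/-- The braid move βᵢ on `ℕ`-indexed tuples (0-indexed): `braidMove j` is the
braid move β_{j+2} of the paper, acting on entries `j` and `j+1`:
`(…, σⱼ, σⱼ₊₁, …) ↦ (…, σⱼσⱼ₊₁σⱼ⁻¹, σⱼ, …)`. -/
def braidMove {G : Type*} [Group G] (j : ℕ) (σ : ℕ → G) : ℕ → G := fun k =>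
  if k = j then σ j * σ (j + 1) * (σ j)⁻¹ else if k = j + 1 then σ j else σ k

/-- `epsMap m` is ε_m: apply β₂, then β₃, …, then β_m (left to right). -/
def epsMap {G : Type*} [Group G] (m : ℕ) (σ : ℕ → G) : ℕ → G :=
  (List.range (m - 1)).foldl (fun t j => braidMove j t) σ

/-- Applying the first `n` braid moves conjugates the entries `1, …, n` by `σ 0`, shifts them one
place to the left, and puts `σ 0` at place `n`. -/
theorem foldl_braidMove_range {G : Type*} [Group G] (n : ℕ) (σ : ℕ → G) (k : ℕ) :
    (List.range n).foldl (fun t j => braidMove j t) σ k =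
      if k < n then σ 0 * σ (k + 1) * (σ 0)⁻¹ else if k = n then σ 0 else σ k := by
  induction n generalizing k with
  | zero => by_cases hk : k = 0 <;> simp [hk]
  | succ n ih =>
    rw [List.range_succ, List.foldl_append, List.foldl_cons, List.foldl_nil]
    simp only [braidMove, ih]
    grind

/-- On the first `m` entries, `epsMap m` is a cyclic rotation followed by conjugation by `σ 0`. -/
theorem epsMap_apply {G : Type*} [Group G] {m k : ℕ} (hk : k < m) (σ : ℕ → G) :
    epsMap m σ k = σ 0 * σ ((k + 1) % m) * (σ 0)⁻¹ := by
  rw [epsMap, foldl_braidMove_range]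
  rcases Nat.lt_or_ge (k + 1) m with h | h
  · rw [if_pos (by omega), Nat.mod_eq_of_lt h]
  · obtain rfl : m = k + 1 := by omega
    simp

theorem exists_iterate_epsMap_eq_conj {G : Type*} [Group G] (m : ℕ) (σ : ℕ → G) (j : ℕ) :
    ∃ γ : G, ∀ k < m, (epsMap m)^[j] σ k = γ * σ ((k + j) % m) * γ⁻¹ := by
  induction j with
  | zero => exact ⟨1, fun k hk => by simp [Nat.mod_eq_of_lt hk]⟩
  | succ j ih =>
    obtain ⟨γ, hγ⟩ := ih
    refine ⟨(epsMap m)^[j] σ 0 * γ, fun k hk => ?_⟩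
    rw [Function.iterate_succ_apply', epsMap_apply hk, hγ _ (Nat.mod_lt _ (by omega)),
      Nat.mod_add_mod, add_right_comm k 1 j, ← add_assoc k j 1]
    group

end Braid

open Braid in
/-- For `m ≥ 3`, the `m`-fold iterate of ε_m = β₂β₃⋯β_m applied to
`(σ₁, …, σ_m)` yields a tuple that is simultaneously conjugate to `(σ₁, …, σ_m)`. -/
theorem statement1 {G : Type*} [Group G] (m : ℕ) (hm : 3 ≤ m) (σ : ℕ → G) :
    ∃ γ : G, ∀ k, k < m → γ⁻¹ * ((epsMap m)^[m] σ) k * γ = σ k := by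
  obtain ⟨γ, hγ⟩ := exists_iterate_epsMap_eq_conj m σ m
  refine ⟨γ, fun k hk => ?_⟩
  rw [hγ k hk, Nat.add_mod_right, Nat.mod_eq_of_lt hk]
  group
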